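/- arXiv:2510.23333 — 2 statements merged into one kernel-verified Lean document; each statement's English description precedes it below -/
import Mathlib

section
/- Let D > 0 with D ≡ 0, 1, or 4 (mod 8), and let e be an integer with e² < D and e² ≡ D (mod 8). The set P_{D,e} of triples (a,b,d) of integers satisfying a > 0, d > 0, 0 ≤ b < a, a·d = (D - e²)/8, and gcd(a,b,d,e) = 1 is finite, and its cardinality equals ∑_{r | f, gcd(r,e)=1} c((D-e²)/(8r²)), where (D-e²)/8 = f²·q with q squarefree, and c(m) = m·∏_{p prime, p | m} (1 + 1/p). -/
/-- `cIdx m = m·∏_{p prime, p ∣ m} (1 + 1/p)`, the index of `Γ₀(m)` in `SL(2,ℤ)`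
(with `cIdx 1 = 1`). -/
def cIdx (m : ℕ) : ℚ := m * ∏ p ∈ m.primeFactors, (1 + 1 / (p : ℚ))

/-!
A triple `(a, b, d)` with `0 ≤ b < a` and `a * d = n` is a matrix in Hermite normal form of
determinant `n`; there are `σ₁(n)` of them. Dividing such a matrix by its content `r` leaves a
primitive one of determinant `n / r²`, and `r² ∣ f² * q` with `q` squarefree means `r ∣ f`. So the
theorem holds once there are `cIdx m` primitive matrices of determinant `m`. Expanding the product,
`cIdx m` is the sum of `m / s` over the squarefree divisors `s` of `m`; as each divisor of `n` is
uniquely `r² * s` with `s` squarefree, the sum of `cIdx (n / r²)` over `r² ∣ n` is `σ₁(n)` too.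
Hence `cIdx` and the primitive count satisfy the same recursion, which determines them.
-/

open Finset ArithmeticFunction
open scoped ArithmeticFunction.sigma

lemma sq_dvd_sq_mul_iff {r f q : ℕ} (hq : Squarefree q) : r ^ 2 ∣ f ^ 2 * q ↔ r ∣ f := by
  refine ⟨fun h ↦ ?_, fun h ↦ (pow_dvd_pow_of_dvd h 2).mul_right q⟩
  rcases eq_or_ne f 0 with rfl | hf
  · exact dvd_zero r
  have hn : f ^ 2 * q ≠ 0 := mul_ne_zero (pow_ne_zero 2 hf) hq.ne_zero
  have hr : r ≠ 0 := by
    rintro rfl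
    exact hn (by simpa using h)
  rw [← Nat.factorization_le_iff_dvd hr hf]
  intro p
  have hvaluation := (Nat.factorization_le_iff_dvd (pow_ne_zero 2 hr) hn).2 h p
  rw [Nat.factorization_mul (pow_ne_zero 2 hf) hq.ne_zero] at hvaluation
  simp only [Nat.factorization_pow, Finsupp.add_apply, Finsupp.smul_apply, smul_eq_mul]
    at hvaluation
  have hqp := hq.natFactorization_le_one p
  lia

lemma eq_and_eq_of_sq_mul_squarefree_eq {r s r' s' : ℕ} (hs : Squarefree s) (hs' : Squarefree s')
    (hr : r ≠ 0) (h : r ^ 2 * s = r' ^ 2 * s') : r = r' ∧ s = s' := by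
  obtain rfl : r = r' := Nat.dvd_antisymm
    ((sq_dvd_sq_mul_iff hs').1 (h ▸ dvd_mul_right _ _))
    ((sq_dvd_sq_mul_iff hs).1 (h ▸ dvd_mul_right _ _))
  exact ⟨rfl, mul_left_cancel₀ (pow_ne_zero 2 hr) h⟩

lemma sum_sum_squarefree_divisors_div_sq {M : Type*} [AddCommMonoid M] (g : ℕ → M) {f q : ℕ}
    (hq : Squarefree q) :
    ∑ r ∈ f.divisors, ∑ s ∈ (f ^ 2 * q / r ^ 2).divisors with Squarefree s, g (r ^ 2 * s) =
      ∑ k ∈ (f ^ 2 * q).divisors, g k := by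
  rw [sum_sigma']
  refine sum_nbij (fun t ↦ t.1 ^ 2 * t.2) ?_ ?_ ?_ fun _ _ ↦ rfl
  · rintro ⟨r, s⟩ ht
    simp only [mem_sigma, mem_filter, Nat.mem_divisors] at ht ⊢
    obtain ⟨⟨hrf, hf⟩, ⟨hs, -⟩, -⟩ := ht
    exact ⟨Nat.mul_dvd_of_dvd_div ((sq_dvd_sq_mul_iff hq).2 hrf) hs,
      mul_ne_zero (pow_ne_zero 2 hf) hq.ne_zero⟩
  · rintro ⟨r, s⟩ ht ⟨r', s'⟩ ht' h
    simp only [coe_sigma, Set.mem_sigma_iff, mem_coe, mem_filter] at ht ht'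
    obtain ⟨rfl, rfl⟩ := eq_and_eq_of_sq_mul_squarefree_eq ht.2.2 ht'.2.2
      (Nat.pos_of_mem_divisors ht.1).ne' h
    rfl
  · intro k hk
    obtain ⟨hkn, hn⟩ := Nat.mem_divisors.1 hk
    obtain ⟨s, r, rfl, hs⟩ := Nat.sq_mul_squarefree k
    have hr : r ^ 2 ∣ f ^ 2 * q := (dvd_mul_right _ _).trans hkn
    have hf : f ≠ 0 := by
      rintro rfl
      simp at hn
    refine ⟨⟨r, s⟩, ?_, rfl⟩
    simp only [coe_sigma, Set.mem_sigma_iff, mem_coe, mem_filter, Nat.mem_divisors]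
    exact ⟨⟨(sq_dvd_sq_mul_iff hq).1 hr, hf⟩,
      ⟨Nat.dvd_div_of_mul_dvd hkn, (Nat.div_ne_zero_iff_of_dvd hr).2
        ⟨hn, ne_zero_of_dvd_ne_zero hn hr⟩⟩, hs⟩

lemma eq_of_sum_div_sq_eq {M : Type*} [AddCancelCommMonoid M] {F G : ℕ → M}
    (h : ∀ f q : ℕ, Squarefree q →
      ∑ r ∈ f.divisors, F (f ^ 2 * q / r ^ 2) = ∑ r ∈ f.divisors, G (f ^ 2 * q / r ^ 2))
    {n : ℕ} (hn : n ≠ 0) : F n = G n := by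
  induction n using Nat.strong_induction_on with
  | h n ih =>
    obtain ⟨q, f, rfl, hq⟩ := Nat.sq_mul_squarefree n
    have hf : f ≠ 0 := by
      rintro rfl
      simp at hn
    have hproper : ∀ r ∈ f.divisors.erase 1,
        F (f ^ 2 * q / r ^ 2) = G (f ^ 2 * q / r ^ 2) := by
      intro r hr
      obtain ⟨hr1, hrf⟩ := mem_erase.1 hr
      have hrn := (sq_dvd_sq_mul_iff hq).2 (Nat.dvd_of_mem_divisors hrf)
      have hr0 := Nat.pos_of_mem_divisors hrf
      exact ih _ (Nat.div_lt_self (Nat.pos_of_ne_zero hn) (Nat.one_lt_pow two_ne_zero (by lia)))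
        ((Nat.div_ne_zero_iff_of_dvd hrn).2 ⟨hn, by positivity⟩)
    have hsum := h f q hq
    rw [← add_sum_erase _ _ (Nat.one_mem_divisors.2 hf),
      ← add_sum_erase _ (fun r ↦ G _) (Nat.one_mem_divisors.2 hf), sum_congr rfl hproper] at hsum
    simpa using add_right_cancel hsum

lemma cIdx_eq_sum_squarefree_divisors (m : ℕ) :
    cIdx m = ∑ s ∈ m.divisors with Squarefree s, ((m / s : ℕ) : ℚ) := by
  rcases eq_or_ne m 0 with rfl | hm
  · simp [cIdx]
  calc cIdx m = m * ∑ t ∈ m.primeFactors.powerset, 1 / ((∏ p ∈ t, p : ℕ) : ℚ) := by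
        simp [cIdx, prod_one_add]
    _ = m * ∑ s ∈ m.divisors with Squarefree s, 1 / (s : ℚ) := by
        rw [Nat.sum_divisors_filter_squarefree hm,
          UniqueFactorizationMonoid.toFinset_normalizedFactors,
          UniqueFactorizationMonoid.primeFactors_eq_natPrimeFactors]
        simp only [prod_val, id]
    _ = ∑ s ∈ m.divisors with Squarefree s, ((m / s : ℕ) : ℚ) := by
        rw [mul_sum]
        refine sum_congr rfl fun s hs ↦ ?_
        rw [Nat.cast_div_charZero (Nat.dvd_of_mem_divisors (mem_filter.1 hs).1), mul_one_div]

lemma sum_cIdx_div_sq {f q : ℕ} (hq : Squarefree q) :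
    ∑ r ∈ f.divisors, cIdx (f ^ 2 * q / r ^ 2) = σ 1 (f ^ 2 * q) := by
  calc ∑ r ∈ f.divisors, cIdx (f ^ 2 * q / r ^ 2)
      = ∑ r ∈ f.divisors, ∑ s ∈ (f ^ 2 * q / r ^ 2).divisors with Squarefree s,
          ((f ^ 2 * q / (r ^ 2 * s) : ℕ) : ℚ) := by
        simp only [cIdx_eq_sum_squarefree_divisors, Nat.div_div_eq_div_mul]
    _ = ∑ k ∈ (f ^ 2 * q).divisors, ((f ^ 2 * q / k : ℕ) : ℚ) :=
        sum_sum_squarefree_divisors_div_sq (fun k ↦ ((f ^ 2 * q / k : ℕ) : ℚ)) hq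
    _ = σ 1 (f ^ 2 * q) := by
        rw [Nat.sum_div_divisors _ (fun k ↦ (k : ℚ)), sigma_one_apply, Nat.cast_sum]

/-- Upper triangular matrices `!![a, b; 0, d]` over `ℕ`, encoded as `⟨(a, d), b⟩` so that those in
Hermite normal form are a `Finset.sigma` over the diagonals. -/
abbrev UpperTriangular : Type := (_ : ℕ × ℕ) × ℕ

namespace UpperTriangular

/-- The content of a matrix: the gcd of its entries. -/
def content (t : UpperTriangular) : ℕ := (t.1.1.gcd t.1.2).gcd t.2

/-- The matrix `!![a, b; 0, d]` as the triple of integers `(a, b, d)`. -/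
def entries (t : UpperTriangular) : ℤ × ℤ × ℤ := (t.1.1, t.2, t.1.2)

lemma content_mul (r a d b : ℕ) : content ⟨(r * a, r * d), r * b⟩ = r * content ⟨(a, d), b⟩ := by
  simp only [content, Nat.gcd_mul_left]

lemma entries_injective : Function.Injective entries := by
  rintro ⟨⟨a, d⟩, b⟩ ⟨⟨a', d'⟩, b'⟩ h
  simp only [entries, Prod.mk.injEq, Nat.cast_inj] at h
  obtain ⟨rfl, rfl, rfl⟩ := h
  rfl

lemma gcd_entries_eq_gcd_content (a b d : ℕ) (e : ℤ) :
    Int.gcd a (Int.gcd b (Int.gcd d e)) = (content ⟨(a, d), b⟩).gcd e.natAbs := by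
  simp only [Int.gcd, Int.natAbs_natCast, content, Nat.gcd_assoc, Nat.gcd_left_comm d b]

end UpperTriangular

open UpperTriangular

/-- The matrices `!![a, b; 0, d]` in Hermite normal form of determinant `n`, that is `a * d = n` and
`0 ≤ b < a`. There are none for `n = 0`. -/
def hermiteForms (n : ℕ) : Finset UpperTriangular :=
  n.divisorsAntidiagonal.sigma fun p ↦ range p.1

lemma mem_hermiteForms {n a d b : ℕ} :
    ⟨(a, d), b⟩ ∈ hermiteForms n ↔ (a * d = n ∧ n ≠ 0) ∧ b < a := by
  simp only [hermiteForms, mem_sigma, Nat.mem_divisorsAntidiagonal, mem_range]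

lemma card_hermiteForms (n : ℕ) : #(hermiteForms n) = σ 1 n := by
  simp only [hermiteForms, card_sigma, card_range, sigma_one_apply]
  exact Nat.sum_divisorsAntidiagonal fun a _ ↦ a

lemma content_sq_dvd {n : ℕ} {t : UpperTriangular} (ht : t ∈ hermiteForms n) :
    content t ^ 2 ∣ n := by
  obtain ⟨⟨a, d⟩, b⟩ := t
  obtain ⟨⟨rfl, -⟩, -⟩ := mem_hermiteForms.1 ht
  have hdvd : content ⟨(a, d), b⟩ ∣ a.gcd d := Nat.gcd_dvd_left _ _
  rw [sq]
  exact mul_dvd_mul (hdvd.trans (Nat.gcd_dvd_left a d)) (hdvd.trans (Nat.gcd_dvd_right a d))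

lemma card_hermiteForms_content_eq {r : ℕ} (hr : r ≠ 0) (m : ℕ) :
    #{t ∈ hermiteForms (r ^ 2 * m) | content t = r} =
      #{t ∈ hermiteForms m | content t = 1} := by
  symm
  refine card_nbij (fun t ↦ ⟨(r * t.1.1, r * t.1.2), r * t.2⟩) ?_ ?_ ?_
  · rintro ⟨⟨a, d⟩, b⟩ ht
    simp only [coe_filter, Set.mem_ofPred_eq, mem_hermiteForms] at ht ⊢
    obtain ⟨⟨⟨rfl, hm⟩, hba⟩, hcontent⟩ := ht
    refine ⟨⟨⟨by ring, mul_ne_zero (pow_ne_zero 2 hr) hm⟩, by gcongr⟩, ?_⟩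
    rw [content_mul, hcontent, mul_one]
  · rintro ⟨⟨a, d⟩, b⟩ - ⟨⟨a', d'⟩, b'⟩ - h
    simpa [hr] using h
  · rintro ⟨⟨x, z⟩, y⟩ ht
    simp only [coe_filter, Set.mem_ofPred_eq, mem_hermiteForms] at ht
    obtain ⟨⟨⟨hdet, hn⟩, hyx⟩, hcontent⟩ := ht
    have hxz : r ∣ x.gcd z := hcontent ▸ Nat.gcd_dvd_left _ _
    obtain ⟨a, rfl⟩ := hxz.trans (Nat.gcd_dvd_left x z)
    obtain ⟨d, rfl⟩ := hxz.trans (Nat.gcd_dvd_right (r * a) z)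
    obtain ⟨b, rfl⟩ : r ∣ y := hcontent ▸ Nat.gcd_dvd_right _ _
    refine ⟨⟨(a, d), b⟩, ?_, rfl⟩
    simp only [coe_filter, Set.mem_ofPred_eq, mem_hermiteForms]
    refine ⟨⟨⟨?_, right_ne_zero_of_mul hn⟩, lt_of_mul_lt_mul_left' hyx⟩, ?_⟩
    · exact mul_left_cancel₀ (pow_ne_zero 2 hr) (by rw [← hdet]; ring)
    · exact mul_left_cancel₀ hr (by rw [← content_mul, hcontent, mul_one])

lemma card_hermiteForms_content (P : ℕ → Prop) [DecidablePred P] {f q : ℕ} (hq : Squarefree q) :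
    #{t ∈ hermiteForms (f ^ 2 * q) | P (content t)} =
      ∑ r ∈ f.divisors with P r, #{t ∈ hermiteForms (f ^ 2 * q / r ^ 2) | content t = 1} := by
  have hmaps : ∀ t ∈ ({t ∈ hermiteForms (f ^ 2 * q) | P (content t)} : Finset UpperTriangular),
      content t ∈ ({r ∈ f.divisors | P r} : Finset ℕ) := by
    intro t ht
    obtain ⟨ht, hP⟩ := mem_filter.1 ht
    have hf : f ≠ 0 := by
      rintro rfl
      simp [hermiteForms] at ht
    exact mem_filter.2 ⟨Nat.mem_divisors.2 ⟨(sq_dvd_sq_mul_iff hq).1 (content_sq_dvd ht), hf⟩, hP⟩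
  rw [card_eq_sum_card_fiberwise hmaps]
  refine sum_congr rfl fun r hr ↦ ?_
  obtain ⟨hrf, hP⟩ := mem_filter.1 hr
  have hrn := (sq_dvd_sq_mul_iff hq).2 (Nat.dvd_of_mem_divisors hrf)
  rw [← card_hermiteForms_content_eq (Nat.pos_of_mem_divisors hrf).ne', Nat.mul_div_cancel' hrn,
    filter_filter]
  congr 1
  exact filter_congr fun t _ ↦ and_iff_right_of_imp fun h ↦ h ▸ hP

lemma card_primitive_hermiteForms (m : ℕ) :
    (#{t ∈ hermiteForms m | content t = 1} : ℚ) = cIdx m := by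
  rcases eq_or_ne m 0 with rfl | hm
  · simp [hermiteForms, cIdx]
  refine eq_of_sum_div_sq_eq (F := fun m ↦ (#{t ∈ hermiteForms m | content t = 1} : ℚ))
    (fun f q hq ↦ ?_) hm
  have hcount := card_hermiteForms_content (fun _ ↦ True) (f := f) hq
  simp only [filter_true, card_hermiteForms] at hcount
  rw [sum_cIdx_div_sq hq, hcount, Nat.cast_sum]

lemma setOf_prototypes_eq_image_entries (n : ℕ) (e : ℤ) :
    {p : ℤ × ℤ × ℤ | 0 < p.1 ∧ 0 < p.2.2 ∧ 0 ≤ p.2.1 ∧ p.2.1 < p.1 ∧ p.1 * p.2.2 = n ∧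
        Int.gcd p.1 (Int.gcd p.2.1 (Int.gcd p.2.2 e)) = 1} =
      (image entries {t ∈ hermiteForms n | (content t).Coprime e.natAbs} : Finset _) := by
  ext ⟨x, y, z⟩
  rw [coe_image, coe_filter]
  constructor
  · rintro ⟨hx, hz, hy, hyx, hdet, hgcd⟩
    lift x to ℕ using hx.le
    lift y to ℕ using hy
    lift z to ℕ using hz.le
    dsimp only at hx hz hyx hdet hgcd
    norm_cast at hx hz hyx hdet
    rw [gcd_entries_eq_gcd_content] at hgcd
    have hn : n ≠ 0 := hdet ▸ (mul_pos hx hz).ne'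
    exact ⟨⟨(x, z), y⟩, ⟨mem_hermiteForms.2 ⟨⟨hdet, hn⟩, hyx⟩, hgcd⟩, rfl⟩
  · rintro ⟨⟨⟨a, d⟩, b⟩, ⟨ht, hcoprime⟩, h⟩
    obtain ⟨⟨hdet, hn⟩, hba⟩ := mem_hermiteForms.1 ht
    simp only [entries, Prod.mk.injEq] at h
    obtain ⟨rfl, rfl, rfl⟩ := h
    have hd : 0 < d := Nat.pos_of_ne_zero (right_ne_zero_of_mul (hdet ▸ hn))
    dsimp only [Set.mem_ofPred_eq]
    refine ⟨by lia, by lia, by lia, by lia, mod_cast hdet, ?_⟩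
    rw [gcd_entries_eq_gcd_content]
    exact hcoprime

/-- Let `D > 0` with `D ≡ 0, 1, 4 (mod 8)` and `e` an integer with `e² < D` and
`e² ≡ D (mod 8)`. The set of prototype triples `(a,b,d)` with `a > 0`, `d > 0`,
`0 ≤ b < a`, `ad = (D - e²)/8` and `gcd(a,b,d,e) = 1` is finite, of cardinality
`∑_{r ∣ f, gcd(r,e)=1} cIdx((D-e²)/(8r²))`, where `(D-e²)/8 = f²q` with `q` squarefree. -/
theorem prototype_count (D e : ℤ) (hD : 0 < D)
    (hmod : D % 8 = 0 ∨ D % 8 = 1 ∨ D % 8 = 4)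
    (he : e ^ 2 < D) (hcong : e ^ 2 % 8 = D % 8)
    (n f q : ℕ) (hn : (n : ℤ) = (D - e ^ 2) / 8) (hfq : n = f ^ 2 * q) (hq : Squarefree q) :
    {p : ℤ × ℤ × ℤ | 0 < p.1 ∧ 0 < p.2.2 ∧ 0 ≤ p.2.1 ∧ p.2.1 < p.1 ∧
        p.1 * p.2.2 = (D - e ^ 2) / 8 ∧
        Int.gcd p.1 (Int.gcd p.2.1 (Int.gcd p.2.2 e)) = 1}.Finite ∧
      (({p : ℤ × ℤ × ℤ | 0 < p.1 ∧ 0 < p.2.2 ∧ 0 ≤ p.2.1 ∧ p.2.1 < p.1 ∧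
          p.1 * p.2.2 = (D - e ^ 2) / 8 ∧
          Int.gcd p.1 (Int.gcd p.2.1 (Int.gcd p.2.2 e)) = 1}.ncard : ℚ)
        = ∑ r ∈ f.divisors.filter (fun r => Nat.Coprime r e.natAbs),
            cIdx (n / r ^ 2)) := by
  rw [← hn, setOf_prototypes_eq_image_entries]
  refine ⟨finite_toSet _, ?_⟩
  rw [Set.ncard_coe_finset, card_image_of_injective _ entries_injective, hfq,
    card_hermiteForms_content (·.Coprime e.natAbs) hq, Nat.cast_sum]
  exact sum_congr rfl fun r _ ↦ card_primitive_hermiteForms _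
end

section
/- Let D be a positive non-square integer with D ≡ 1 (mod 8). Then S_D := ∑_{0 < e < √D, e odd} (-1)^((e-1)/2) · e · m_D(e) = 0, where m_D(e) is the number of integer triples (a,b,d) with a > 0, d > 0, 0 ≤ b < a, ad = (D - e²)/8, and gcd(a,b,d,e) = 1. -/
/-- `mD D e` is the number of integer triples `(a,b,d)` with `a > 0`, `d > 0`,
`0 ≤ b < a`, `ad = (D - e²)/8` and `gcd(a,b,d,e) = 1`. -/
noncomputable def mD (D : ℕ) (e : ℕ) : ℕ :=
  {p : ℤ × ℤ × ℤ | 0 < p.1 ∧ 0 < p.2.2 ∧ 0 ≤ p.2.1 ∧ p.2.1 < p.1 ∧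
    p.1 * p.2.2 = ((D : ℤ) - (e : ℤ) ^ 2) / 8 ∧
    Int.gcd p.1 (Int.gcd p.2.1 (Int.gcd p.2.2 (e : ℤ))) = 1}.ncard

/-! Counting `b` first, `m_D(e)` is the sum of `a φ(g) / g` over the triples `(a, e, d)` of
positive integers with `e² + 8ad = D`, where `g = gcd(a, e, d)`. Read `(a, e, d)` as the binary
quadratic form `2aX² + eXY - dY²` of discriminant `D`. The factor `k = χ₄(e) φ(g) / g` is invariant
under `Γ₀(2)` and under the involution exchanging `a` and `d`.

Set `δ = sgn a + sgn d`. For nonsquare `D` only finitely many forms of discriminant `D` have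
`δ ≠ 0`, so `Z(w) = ∑ k δ w` makes sense for every function `w`. The translations `T` and `U`
generating `Γ₀(2)` fix `a` and `d` respectively, and `R = T⁻¹U` has the `a` of `U` and the `d`
of `T`; hence `δ - δ ∘ U + δ ∘ R - δ ∘ T = 0`. Summing this against `k d²` gives
`Z((d - e - 2a)²) = Z((d + e - 2a)²)`, that is `2 Z(ea) = Z(ed)`. As `Z(ea) = Z(ed)` by the
exchange of `a` and `d`, both vanish, and by symmetry `Z(ea)` is a multiple of the sum over
positive `(a, e, d)`. -/

open Function

theorem finsum_eq_two_mul_finsum_mem {α R : Type*} [NonAssocSemiring R] {f : α → R} {s : Set α}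
    (σ : Equiv.Perm α) (hf : f.HasFiniteSupport) (hσ : ∀ x, f (σ x) = f x)
    (hs : ∀ x, f x ≠ 0 → (σ x ∈ s ↔ x ∉ s)) : ∑ᶠ x, f x = 2 * ∑ᶠ x ∈ s, f x := by
  classical
  have hfs : (s.indicator f).HasFiniteSupport := hf.subset <| by simp [Set.support_indicator]
  have split : ∀ x, f x = s.indicator f x + s.indicator f (σ x) := by
    intro x
    by_cases hx : f x = 0
    · simp [Set.indicator_apply, hσ, hx]
    · by_cases hxs : x ∈ s <;> simp [hσ, hs x hx, hxs]
  calc ∑ᶠ x, f x = ∑ᶠ x, (s.indicator f x + s.indicator f (σ x)) := finsum_congr split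
    _ = ∑ᶠ x, s.indicator f x + ∑ᶠ x, s.indicator f (σ x) :=
      finsum_add_distrib hfs (hfs.fun_comp_of_injective σ.injective)
    _ = 2 * ∑ᶠ x ∈ s, f x := by rw [finsum_comp_equiv σ, ← finsum_mem_def, two_mul]

theorem card_filter_coprime_range_mul (m k : ℕ) :
    ((Finset.range (m * k)).filter m.Coprime).card = k * m.totient := by
  rw [← Nat.count_eq_card_filter_range]
  induction k with
  | zero => simp
  | succ k ih =>
    simp only [mul_add, mul_one, Nat.count_add, ih, Nat.coprime_mul_left_add_right]
    rw [Nat.count_eq_card_filter_range, ← Nat.totient_eq_card_coprime]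
    ring

/-- The triple `(a, e, d)` stands for the binary quadratic form `2aX² + eXY - dY²`. -/
abbrev LevelTwoForm : Type := ℤ × ℤ × ℤ

namespace LevelTwoForm

/-- The discriminant of the form `2aX² + eXY - dY²`. -/
def disc (x : LevelTwoForm) : ℤ := x.2.1 ^ 2 + 8 * (x.1 * x.2.2)

/-- The greatest common divisor of the entries `a`, `e`, `d`. It is not the content of
`2aX² + eXY - dY²`, in which `a` is doubled. -/
def entryGcd (x : LevelTwoForm) : ℕ := Int.gcd x.1 (Int.gcd x.2.1 x.2.2)

/-- The substitution `X ↦ X + Y`. -/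
def translate : LevelTwoForm ≃+ LevelTwoForm where
  toFun x := (x.1, x.2.1 + 4 * x.1, x.2.2 - x.2.1 - 2 * x.1)
  invFun x := (x.1, x.2.1 - 4 * x.1, x.2.2 + x.2.1 - 2 * x.1)
  left_inv x := by ext <;> dsimp only <;> ring
  right_inv x := by ext <;> dsimp only <;> ring
  map_add' x y := by ext <;> simp only [Prod.fst_add, Prod.snd_add] <;> ring

/-- The exchange of `a` and `d`, that is the Atkin–Lehner involution of level 2 up to sign. -/
def swap : LevelTwoForm ≃+ LevelTwoForm where
  toFun x := (x.2.2, x.2.1, x.1)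
  invFun x := (x.2.2, x.2.1, x.1)
  left_inv _ := rfl
  right_inv _ := rfl
  map_add' _ _ := rfl

/-- The substitution `Y ↦ Y + 2X`, conjugate to the inverse of `translate` under `swap`. -/
def lowerTranslate : LevelTwoForm ≃+ LevelTwoForm :=
  swap.trans (translate.symm.trans swap)

/-- The action of the element of order two of `Γ₀(2)/±1` given by `X ↦ X - Y`, `Y ↦ 2X - Y`. -/
def elliptic : LevelTwoForm ≃+ LevelTwoForm :=
  lowerTranslate.trans translate.symm

/-- The reflection `Y ↦ -Y`, which changes the sign of `e`. -/
def negMiddle : LevelTwoForm ≃+ LevelTwoForm where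
  toFun x := (x.1, -x.2.1, x.2.2)
  invFun x := (x.1, -x.2.1, x.2.2)
  left_inv x := by simp
  right_inv x := by simp
  map_add' x y := by simp [neg_add_rev, add_comm]

/-- The change of sign of `a` and `d`. -/
def negEnds : LevelTwoForm ≃+ LevelTwoForm where
  toFun x := (-x.1, x.2.1, -x.2.2)
  invFun x := (-x.1, x.2.1, -x.2.2)
  left_inv x := by simp
  right_inv x := by simp
  map_add' x y := by simp [neg_add_rev, add_comm]

section Formulas

variable (x : LevelTwoForm)

theorem translate_apply :
    translate x = (x.1, x.2.1 + 4 * x.1, x.2.2 - x.2.1 - 2 * x.1) := rfl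

theorem translate_symm_apply :
    translate.symm x = (x.1, x.2.1 - 4 * x.1, x.2.2 + x.2.1 - 2 * x.1) := rfl

theorem swap_apply : swap x = (x.2.2, x.2.1, x.1) := rfl

theorem lowerTranslate_apply :
    lowerTranslate x = (x.1 + x.2.1 - 2 * x.2.2, x.2.1 - 4 * x.2.2, x.2.2) := rfl

theorem elliptic_apply :
    elliptic x = (x.1 + x.2.1 - 2 * x.2.2, -4 * x.1 - 3 * x.2.1 + 4 * x.2.2,
      x.2.2 - x.2.1 - 2 * x.1) := by
  ext <;> simp only [elliptic, AddEquiv.trans_apply, lowerTranslate_apply, translate_symm_apply] <;>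
    ring

theorem negMiddle_apply : negMiddle x = (x.1, -x.2.1, x.2.2) := rfl

theorem negEnds_apply : negEnds x = (-x.1, x.2.1, -x.2.2) := rfl

theorem elliptic_involutive : Involutive elliptic := by
  intro x
  ext <;> simp only [elliptic_apply] <;> ring

theorem disc_translate : disc (translate x) = disc x := by
  simp only [disc, translate_apply]; ring

theorem disc_swap : disc (swap x) = disc x := by
  simp only [disc, swap_apply]; ring

theorem disc_negMiddle : disc (negMiddle x) = disc x := by
  simp only [disc, negMiddle_apply]; ring

theorem disc_negEnds : disc (negEnds x) = disc x := by
  simp only [disc, negEnds_apply]; ring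

end Formulas

theorem gcd_eq_entryGcd_gcd (a b d e : ℕ) :
    Int.gcd a (Int.gcd b (Int.gcd d e)) = (entryGcd (a, e, d)).gcd b := by
  simp only [entryGcd, Int.gcd_natCast_natCast]
  rw [Nat.gcd_comm d e, Nat.gcd_comm b, ← Nat.gcd_assoc]

variable {x : LevelTwoForm}

theorem dvd_entryGcd_iff {n : ℕ} : n ∣ entryGcd x ↔ ∃ y, x = n • y := by
  have hdvd : n ∣ entryGcd x ↔ (n : ℤ) ∣ x.1 ∧ (n : ℤ) ∣ x.2.1 ∧ (n : ℤ) ∣ x.2.2 := by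
    rw [entryGcd, Int.dvd_gcd_iff, Int.natCast_dvd_natCast, Int.dvd_gcd_iff]
  rw [hdvd]
  simp [dvd_def, Prod.ext_iff]

theorem entryGcd_dvd_entryGcd_map (f : LevelTwoForm →+ LevelTwoForm) (x : LevelTwoForm) :
    entryGcd x ∣ entryGcd (f x) := by
  obtain ⟨y, hy⟩ := dvd_entryGcd_iff.1 (dvd_refl (entryGcd x))
  exact dvd_entryGcd_iff.2 ⟨f y, by rw [← map_nsmul, ← hy]⟩

theorem entryGcd_map (σ : LevelTwoForm ≃+ LevelTwoForm) (x : LevelTwoForm) :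
    entryGcd (σ x) = entryGcd x :=
  Nat.dvd_antisymm (by simpa using entryGcd_dvd_entryGcd_map σ.symm.toAddMonoidHom (σ x))
    (entryGcd_dvd_entryGcd_map σ.toAddMonoidHom x)

/-- The sum `sgn a + sgn d`, which is nonzero on the forms with `ad > 0` and zero on those with
`ad < 0`. -/
def signSum (x : LevelTwoForm) : ℤ := x.1.sign + x.2.2.sign

theorem signSum_swap (x : LevelTwoForm) : signSum (swap x) = signSum x :=
  add_comm _ _

theorem signSum_negMiddle (x : LevelTwoForm) : signSum (negMiddle x) = signSum x := rfl

theorem signSum_negEnds (x : LevelTwoForm) : signSum (negEnds x) = -signSum x := by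
  simp [signSum, negEnds_apply, add_comm]

theorem signSum_add_signSum_elliptic (x : LevelTwoForm) :
    signSum x + signSum (elliptic x) = signSum (lowerTranslate x) + signSum (translate x) := by
  simp only [signSum, elliptic_apply, lowerTranslate_apply, translate_apply]
  ring

theorem signSum_eq_zero_of_mul_neg (h : x.1 * x.2.2 < 0) : signSum x = 0 := by
  rcases mul_neg_iff.1 h with ⟨ha, hd⟩ | ⟨ha, hd⟩ <;>
    simp [signSum, Int.sign_eq_one_of_pos, Int.sign_eq_neg_one_of_neg, ha, hd]

section SignedSum

variable {R : Type*} {k : LevelTwoForm → R}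

theorem apply_lowerTranslate_of_invariant (htranslate : ∀ x, k (translate x) = k x)
    (hswap : ∀ x, k (swap x) = k x) (x : LevelTwoForm) : k (lowerTranslate x) = k x := by
  rw [lowerTranslate, AddEquiv.trans_apply, AddEquiv.trans_apply, hswap, ← htranslate,
    AddEquiv.apply_symm_apply, hswap]

theorem apply_elliptic_of_invariant (htranslate : ∀ x, k (translate x) = k x)
    (hswap : ∀ x, k (swap x) = k x) (x : LevelTwoForm) : k (elliptic x) = k x := by
  rw [elliptic, AddEquiv.trans_apply, ← htranslate, AddEquiv.apply_symm_apply,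
    apply_lowerTranslate_of_invariant htranslate hswap]

variable [CommRing R]

/-- The functional `w ↦ ∑ k δ w`, where `δ` is `signSum`. The sum is meaningful when `k δ` has
finite support, and has the junk value `0` when `k δ w` does not. -/
noncomputable def signedSum (k w : LevelTwoForm → R) : R :=
  ∑ᶠ x, k x * signSum x * w x

theorem signedSum_add (hfin : HasFiniteSupport fun x => k x * (signSum x : R))
    (w w' : LevelTwoForm → R) :
    signedSum k (fun x => w x + w' x) = signedSum k w + signedSum k w' := by
  simp only [signedSum, mul_add]
  exact finsum_add_distrib (by fun_prop) (by fun_prop)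

theorem signedSum_const_mul (hfin : HasFiniteSupport fun x => k x * (signSum x : R)) (c : R)
    (w : LevelTwoForm → R) : signedSum k (fun x => c * w x) = c * signedSum k w := by
  rw [signedSum, signedSum, mul_finsum' _ _ (by fun_prop)]
  simp only [mul_left_comm]

theorem finsum_mul_signSum_map (σ : LevelTwoForm ≃+ LevelTwoForm) (hσ : ∀ x, k (σ x) = k x)
    (w : LevelTwoForm → R) :
    ∑ᶠ x, k x * signSum (σ x) * w x = signedSum k fun x => w (σ.symm x) := by
  rw [signedSum, ← finsum_comp_equiv σ.toEquiv (f := fun x => k x * signSum x * w (σ.symm x))]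
  simp [hσ]

theorem hasFiniteSupport_mul_signSum_map (hfin : HasFiniteSupport fun x => k x * (signSum x : R))
    (σ : LevelTwoForm ≃+ LevelTwoForm) (hσ : ∀ x, k (σ x) = k x) :
    HasFiniteSupport fun x => k x * (signSum (σ x) : R) := by
  simpa only [hσ] using hfin.fun_comp_of_injective σ.injective

theorem signedSum_four_term (htranslate : ∀ x, k (translate x) = k x)
    (hswap : ∀ x, k (swap x) = k x) (hfin : HasFiniteSupport fun x => k x * (signSum x : R))
    (w : LevelTwoForm → R) :
    signedSum k w + signedSum k (fun x => w (elliptic.symm x)) =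
      signedSum k (fun x => w (lowerTranslate.symm x)) +
        signedSum k fun x => w (translate.symm x) := by
  have hlower := apply_lowerTranslate_of_invariant htranslate hswap
  have helliptic := apply_elliptic_of_invariant htranslate hswap
  have hfin_translate := hasFiniteSupport_mul_signSum_map hfin translate htranslate
  have hfin_lower := hasFiniteSupport_mul_signSum_map hfin lowerTranslate hlower
  have hfin_elliptic := hasFiniteSupport_mul_signSum_map hfin elliptic helliptic
  rw [← finsum_mul_signSum_map elliptic helliptic, ← finsum_mul_signSum_map lowerTranslate hlower,
    ← finsum_mul_signSum_map translate htranslate, signedSum,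
    ← finsum_add_distrib (by fun_prop) (by fun_prop),
    ← finsum_add_distrib (by fun_prop) (by fun_prop)]
  refine finsum_congr fun x => ?_
  have hδ := congrArg (Int.cast (R := R)) (signSum_add_signSum_elliptic x)
  push_cast at hδ
  linear_combination k x * w x * hδ

theorem signedSum_middle_mul_swap (hswap : ∀ x, k (swap x) = k x) :
    signedSum k (fun x => x.2.1 * x.2.2) = signedSum k fun x => x.2.1 * x.1 := by
  rw [signedSum, signedSum, ← finsum_comp_equiv (swap : LevelTwoForm ≃ LevelTwoForm)]
  refine finsum_congr fun x => ?_
  rw [AddEquiv.coe_toEquiv, hswap, signSum_swap, swap_apply]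

theorem signedSum_middle_mul_eq_zero [IsDomain R] [CharZero R]
    (htranslate : ∀ x, k (translate x) = k x) (hswap : ∀ x, k (swap x) = k x)
    (hfin : HasFiniteSupport fun x => k x * (signSum x : R)) :
    signedSum k (fun x => x.2.1 * x.1) = 0 := by
  have squares : signedSum k (fun x => ((x.2.2 : R) - x.2.1 - 2 * x.1) ^ 2) =
      signedSum k fun x => ((x.2.2 : R) + x.2.1 - 2 * x.1) ^ 2 := by
    have four_term := signedSum_four_term htranslate hswap hfin fun x => (x.2.2 : R) ^ 2
    have elliptic_symm : elliptic.symm = elliptic :=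
      AddEquiv.ext fun x => elliptic.symm_apply_eq.2 (elliptic_involutive x).symm
    have lowerTranslate_symm (x : LevelTwoForm) : (lowerTranslate.symm x).2.2 = x.2.2 := rfl
    simp only [lowerTranslate_symm, add_right_inj, elliptic_symm] at four_term
    simpa [elliptic_apply, translate_symm_apply] using four_term
  have expand : signedSum k (fun x => ((x.2.2 : R) - x.2.1 - 2 * x.1) ^ 2) +
        4 * signedSum k (fun x => x.2.1 * x.2.2) =
      signedSum k (fun x => ((x.2.2 : R) + x.2.1 - 2 * x.1) ^ 2) +
        8 * signedSum k fun x => x.2.1 * x.1 := by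
    rw [← signedSum_const_mul hfin, ← signedSum_const_mul hfin, ← signedSum_add hfin,
      ← signedSum_add hfin]
    congr 1
    ext x
    ring
  rw [squares, signedSum_middle_mul_swap hswap] at expand
  have : 4 * signedSum k (fun x => (x.2.1 : R) * x.1) = 0 := by linear_combination -expand
  simpa using this

end SignedSum

theorem abs_le_of_disc_eq {D : ℤ} (hdisc : disc x = D) (hpos : 0 < x.1 * x.2.2) :
    |x.1| ≤ D ∧ |x.2.1| ≤ D ∧ |x.2.2| ≤ D := by
  obtain ⟨a, e, d⟩ := x
  simp only [disc] at hdisc hpos ⊢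
  have ha : 0 < |a| := abs_pos.2 (left_ne_zero_of_mul hpos.ne')
  have hd : 0 < |d| := abs_pos.2 (right_ne_zero_of_mul hpos.ne')
  have had : |a| * |d| = a * d := by rw [← abs_mul, abs_of_pos hpos]
  have he : |e| ≤ e ^ 2 := by simpa using Int.natAbs_le_self_sq e
  refine ⟨?_, ?_, ?_⟩ <;> nlinarith [sq_nonneg e]

theorem finite_setOf_disc_eq (D : ℤ) : {x | disc x = D ∧ 0 < x.1 * x.2.2}.Finite := by
  refine (Set.finite_Icc ((-D, -D, -D) : LevelTwoForm) (D, D, D)).subset ?_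
  rintro x ⟨hdisc, hpos⟩
  obtain ⟨ha, he, hd⟩ := abs_le_of_disc_eq hdisc hpos
  rw [abs_le] at ha he hd
  exact ⟨⟨ha.1, he.1, hd.1⟩, ⟨ha.2, he.2, hd.2⟩⟩

theorem mul_pos_of_signSum_ne_zero (hsq : ¬ IsSquare (disc x)) (hδ : signSum x ≠ 0) :
    0 < x.1 * x.2.2 := by
  rcases lt_trichotomy (x.1 * x.2.2) 0 with hneg | hzero | hpos
  · exact absurd (signSum_eq_zero_of_mul_neg hneg) hδ
  · exact absurd ⟨x.2.1, by simp [disc, hzero, sq]⟩ hsq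
  · exact hpos

/-- The invariant factor `χ₄(e) φ(g) / g` of a form of discriminant `D`, where `g` is the greatest
common divisor of its entries, extended by zero to the other forms. -/
def weight (D : ℤ) (x : LevelTwoForm) : ℚ :=
  if disc x = D then ZMod.χ₄ (x.2.1 : ZMod 4) * ((entryGcd x).totient / entryGcd x) else 0

section Weight

variable {D : ℤ}

theorem disc_eq_of_weight_ne_zero (h : weight D x ≠ 0) : disc x = D :=
  of_not_not fun hD => h (if_neg hD)

theorem weight_map {σ : LevelTwoForm ≃+ LevelTwoForm} (hdisc : disc (σ x) = disc x)
    (hmiddle : ((σ x).2.1 : ZMod 4) = x.2.1) : weight D (σ x) = weight D x := by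
  rw [weight, weight, entryGcd_map, hdisc, hmiddle]

theorem weight_translate (x : LevelTwoForm) : weight D (translate x) = weight D x := by
  refine weight_map (disc_translate x) ?_
  have four_eq_zero : (4 : ZMod 4) = 0 := rfl
  simp [translate_apply, four_eq_zero]

theorem weight_swap (x : LevelTwoForm) : weight D (swap x) = weight D x :=
  weight_map (disc_swap x) rfl

theorem weight_negEnds (x : LevelTwoForm) : weight D (negEnds x) = weight D x :=
  weight_map (disc_negEnds x) rfl

theorem weight_negMiddle (x : LevelTwoForm) : weight D (negMiddle x) = -weight D x := by
  have χ₄_neg : ∀ z : ZMod 4, ZMod.χ₄ (-z) = -ZMod.χ₄ z := by decide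
  rw [weight, weight, entryGcd_map, disc_negMiddle]
  split_ifs <;> simp [negMiddle_apply, χ₄_neg]

theorem mul_pos_of_weight_mul_signSum_ne_zero (hsq : ¬ IsSquare D)
    (h : weight D x * signSum x ≠ 0) : 0 < x.1 * x.2.2 :=
  mul_pos_of_signSum_ne_zero (disc_eq_of_weight_ne_zero (left_ne_zero_of_mul h) ▸ hsq)
    (Int.cast_ne_zero.1 (right_ne_zero_of_mul h))

theorem hasFiniteSupport_weight_mul_signSum (hsq : ¬ IsSquare D) :
    HasFiniteSupport fun x => weight D x * signSum x :=
  (finite_setOf_disc_eq D).subset fun _ hx =>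
    ⟨disc_eq_of_weight_ne_zero (left_ne_zero_of_mul hx),
      mul_pos_of_weight_mul_signSum_ne_zero hsq hx⟩

theorem signedSum_weight_eq_four_mul (hsq : ¬ IsSquare D) :
    signedSum (weight D) (fun x => x.2.1 * x.1) =
      4 * ∑ᶠ x ∈ {x : LevelTwoForm | 0 < x.1 ∧ 0 < x.2.1},
        weight D x * signSum x * (x.2.1 * x.1) := by
  have hfin := hasFiniteSupport_weight_mul_signSum hsq
  set f : LevelTwoForm → ℚ := fun x => weight D x * signSum x * (x.2.1 * x.1)
  have hf : f.HasFiniteSupport := by fun_prop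
  have f_negEnds (x : LevelTwoForm) : f (negEnds x) = f x := by
    simp only [f, weight_negEnds, signSum_negEnds]
    simp [negEnds_apply]
  have f_negMiddle (x : LevelTwoForm) : f (negMiddle x) = f x := by
    simp only [f, weight_negMiddle, signSum_negMiddle]
    simp [negMiddle_apply]
  let A : Set LevelTwoForm := {x | 0 < x.1}
  let E : Set LevelTwoForm := {x | 0 < x.2.1}
  have halve_ends : ∑ᶠ x, f x = 2 * ∑ᶠ x ∈ A, f x := by
    refine finsum_eq_two_mul_finsum_mem (negEnds : LevelTwoForm ≃ LevelTwoForm) hf f_negEnds ?_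
    intro x hx
    have : x.1 ≠ 0 := fun h => hx (by simp [f, h])
    simp only [A, AddEquiv.coe_toEquiv, negEnds_apply, Set.mem_ofPred_eq]
    omega
  have halve_middle : ∑ᶠ x, A.indicator f x = 2 * ∑ᶠ x ∈ E, A.indicator f x := by
    refine finsum_eq_two_mul_finsum_mem (negMiddle : LevelTwoForm ≃ LevelTwoForm)
      (hf.subset <| by simp [Set.support_indicator]) (fun x => ?_) ?_
    · have negMiddle_mem : negMiddle x ∈ A ↔ x ∈ A := Iff.rfl
      simp [Set.indicator_apply, f_negMiddle, negMiddle_mem]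
    intro x hx
    have : x.2.1 ≠ 0 := fun h => hx (by simp [f, h])
    simp only [E, AddEquiv.coe_toEquiv, negMiddle_apply, Set.mem_ofPred_eq]
    omega
  calc ∑ᶠ x, f x = 2 * (2 * ∑ᶠ x ∈ E, A.indicator f x) := by
        rw [halve_ends, finsum_mem_def, halve_middle]
    _ = 4 * ∑ᶠ x ∈ E ∩ A, f x := by
        rw [finsum_mem_def, finsum_mem_def, Set.indicator_indicator]
        ring
    _ = 4 * ∑ᶠ x ∈ {x | 0 < x.1 ∧ 0 < x.2.1}, f x := by rw [Set.inter_comm]; rfl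

end Weight

/-- The forms of discriminant `D` with positive entries. -/
def positiveForms (D : ℤ) : Set LevelTwoForm :=
  {x | disc x = D ∧ 0 < x.1 ∧ 0 < x.2.1 ∧ 0 < x.2.2}

theorem signSum_eq_two_of_mem_positiveForms {D : ℤ} (hx : x ∈ positiveForms D) :
    signSum x = 2 := by
  rw [signSum, Int.sign_eq_one_of_pos hx.2.1, Int.sign_eq_one_of_pos hx.2.2.2, one_add_one_eq_two]

theorem finsum_mem_positiveForms_eq_zero {D : ℤ} (hsq : ¬ IsSquare D) :
    ∑ᶠ x ∈ positiveForms D, weight D x * (x.2.1 * x.1) = 0 := by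
  have hzero : ∑ᶠ x ∈ {x : LevelTwoForm | 0 < x.1 ∧ 0 < x.2.1},
      weight D x * signSum x * (x.2.1 * x.1) = 0 := by
    have h := signedSum_middle_mul_eq_zero weight_translate weight_swap
      (hasFiniteSupport_weight_mul_signSum hsq)
    simpa [signedSum_weight_eq_four_mul hsq] using h
  have restrict : ∑ᶠ x ∈ {x : LevelTwoForm | 0 < x.1 ∧ 0 < x.2.1},
      weight D x * signSum x * (x.2.1 * x.1) =
      ∑ᶠ x ∈ positiveForms D, weight D x * signSum x * (x.2.1 * x.1) := by
    refine finsum_mem_inter_support_eq _ _ _ ?_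
    ext x
    simp only [Set.mem_inter_iff, mem_support, and_congr_left_iff]
    intro hx
    have hweight := left_ne_zero_of_mul hx
    refine ⟨fun ⟨ha, he⟩ => ?_, fun ⟨_, ha, he, _⟩ => ⟨ha, he⟩⟩
    have had := mul_pos_of_weight_mul_signSum_ne_zero hsq hweight
    exact ⟨disc_eq_of_weight_ne_zero (left_ne_zero_of_mul hweight), ha, he,
      pos_of_mul_pos_right had ha.le⟩
  have double : ∑ᶠ x ∈ positiveForms D, weight D x * signSum x * (x.2.1 * x.1) =
      2 * ∑ᶠ x ∈ positiveForms D, weight D x * (x.2.1 * x.1) := by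
    rw [mul_finsum_mem]
    refine finsum_mem_congr rfl fun x hx => ?_
    rw [signSum_eq_two_of_mem_positiveForms hx]
    push_cast
    ring
  rw [restrict, double] at hzero
  simpa using hzero

theorem disc_natCast_eq_iff {D a e d : ℕ} (hmod : D % 8 = 1) (he : Odd e) (hle : e ^ 2 ≤ D) :
    disc (a, e, d) = D ↔ a * d = (D - e ^ 2) / 8 := by
  have hdvd := Nat.eight_dvd_sq_sub_one_of_odd he
  have hpos : 0 < e ^ 2 := pow_pos he.pos 2
  simp only [disc]
  norm_cast
  omega

theorem bijOn_positiveForms {D : ℕ} (hmod : D % 8 = 1) :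
    Set.BijOn (fun t : (_ : ℕ) × ℕ × ℕ => ((t.2.1, t.1, t.2.2) : LevelTwoForm))
      (((Finset.range D).filter fun e => Odd e ∧ e ^ 2 < D).sigma fun e =>
        ((D - e ^ 2) / 8).divisorsAntidiagonal) (positiveForms D) := by
  refine ⟨?_, ?_, ?_⟩
  · rintro ⟨e, a, d⟩ ht
    simp only [Finset.coe_sigma, Set.mem_sigma_iff, Finset.mem_coe, Nat.mem_divisorsAntidiagonal,
      Finset.mem_filter] at ht
    obtain ⟨⟨-, he, hlt⟩, had, hne⟩ := ht
    obtain ⟨ha, hd⟩ := mul_ne_zero_iff.1 (had ▸ hne)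
    have := he.pos
    exact ⟨(disc_natCast_eq_iff hmod he hlt.le).2 had, by positivity, by positivity, by positivity⟩
  · rintro ⟨e, a, d⟩ - ⟨e', a', d'⟩ - h
    simp only [Prod.mk.injEq, Nat.cast_inj] at h
    obtain ⟨rfl, rfl, rfl⟩ := h
    rfl
  · rintro ⟨a, e, d⟩ ⟨hdisc, ha, he, hd⟩
    dsimp only at ha he hd
    lift a to ℕ using ha.le
    lift e to ℕ using he.le
    lift d to ℕ using hd.le
    norm_cast at ha he hd
    have hsum : e ^ 2 + 8 * (a * d) = D := by simp only [disc] at hdisc; exact_mod_cast hdisc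
    have had : 0 < a * d := Nat.mul_pos ha hd
    have hlt : e ^ 2 < D := by omega
    have hodd : Odd e := (Nat.odd_pow_iff two_ne_zero).1 (Nat.odd_iff.2 (by omega))
    have hquot := (disc_natCast_eq_iff hmod hodd hlt.le).1 hdisc
    refine ⟨⟨e, a, d⟩, ?_, rfl⟩
    simp only [Finset.coe_sigma, Set.mem_sigma_iff, Finset.mem_coe, Nat.mem_divisorsAntidiagonal,
      Finset.mem_filter, Finset.mem_range]
    exact ⟨⟨(Nat.le_self_pow two_ne_zero e).trans_lt hlt, hodd, hlt⟩, hquot, hquot ▸ had.ne'⟩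

theorem weight_natCast_of_odd {D : ℤ} {a e d : ℕ} (he : Odd e) (hdisc : disc (a, e, d) = D) :
    weight D (a, e, d) =
      (-1) ^ ((e - 1) / 2) * ((entryGcd (a, e, d)).totient / entryGcd (a, e, d)) := by
  have hhalf : (e - 1) / 2 = e / 2 := by grind
  rw [weight, if_pos hdisc, hhalf, Int.cast_natCast,
    ZMod.χ₄_eq_neg_one_pow (Nat.odd_iff.1 he)]
  push_cast
  rfl

end LevelTwoForm

open LevelTwoForm

theorem mD_eq_sum_divisorsAntidiagonal {D e : ℕ} (he : e ^ 2 ≤ D) :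
    mD D e = ∑ p ∈ ((D - e ^ 2) / 8).divisorsAntidiagonal,
      ((Finset.range p.1).filter (entryGcd (p.1, e, p.2)).Coprime).card := by
  have hquot : ((D : ℤ) - (e : ℤ) ^ 2) / 8 = ((D - e ^ 2) / 8 : ℕ) := by
    push_cast [he]
    rfl
  rw [← Finset.card_sigma, ← Set.ncard_coe_finset, mD, hquot]
  symm
  refine Set.ncard_congr (fun t _ => ((t.1.1 : ℤ), (t.2 : ℤ), (t.1.2 : ℤ))) ?_ ?_ ?_
  · rintro ⟨⟨a, d⟩, b⟩ ht
    simp only [Finset.coe_sigma, Set.mem_sigma_iff, Finset.mem_coe, Nat.mem_divisorsAntidiagonal,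
      Finset.mem_filter, Finset.mem_range] at ht
    obtain ⟨⟨had, hne⟩, hb, hcop⟩ := ht
    rw [← had] at hne ⊢
    obtain ⟨ha, hd⟩ := mul_ne_zero_iff.1 hne
    exact ⟨by positivity, by positivity, by positivity, Nat.cast_lt.2 hb, by push_cast; rfl,
      (gcd_eq_entryGcd_gcd a b d e).trans hcop⟩
  · rintro ⟨⟨a, d⟩, b⟩ ⟨⟨a', d'⟩, b'⟩ - - h
    simp only [Prod.mk.injEq, Nat.cast_inj] at h
    obtain ⟨rfl, rfl, rfl⟩ := h
    rfl
  · rintro ⟨a, b, d⟩ ⟨ha, hd, hb, hba, had, hcop⟩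
    dsimp only at ha hd hb hba had hcop
    lift a to ℕ using ha.le
    lift b to ℕ using hb
    lift d to ℕ using hd.le
    norm_cast at ha hd hba had
    refine ⟨⟨(a, d), b⟩, ?_, rfl⟩
    simp only [Finset.coe_sigma, Set.mem_sigma_iff, Finset.mem_coe, Nat.mem_divisorsAntidiagonal,
      Finset.mem_filter, Finset.mem_range]
    exact ⟨⟨had, had ▸ (Nat.mul_pos ha hd).ne'⟩, hba, (gcd_eq_entryGcd_gcd a b d e).symm.trans hcop⟩

theorem mD_eq_sum_totient_div {D e : ℕ} (he : e ^ 2 ≤ D) :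
    (mD D e : ℚ) = ∑ p ∈ ((D - e ^ 2) / 8).divisorsAntidiagonal,
      ((entryGcd (p.1, e, p.2)).totient / entryGcd (p.1, e, p.2) : ℚ) * p.1 := by
  rw [mD_eq_sum_divisorsAntidiagonal he, Nat.cast_sum]
  refine Finset.sum_congr rfl fun p hp => ?_
  have hne : p.1 ≠ 0 := (Nat.ne_zero_of_mem_divisorsAntidiagonal hp).1
  obtain ⟨k, hk⟩ : entryGcd (p.1, e, p.2) ∣ p.1 :=
    Int.natCast_dvd_natCast.1 (Int.gcd_dvd_left _ _)
  set g := entryGcd (p.1, e, p.2)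
  have hg : (g : ℚ) ≠ 0 := Nat.cast_ne_zero.2 (left_ne_zero_of_mul (hk ▸ hne))
  rw [hk, card_filter_coprime_range_mul]
  push_cast
  field_simp

/-- For a positive non-square integer `D ≡ 1 (mod 8)`,
`S_D = ∑_{0 < e < √D, e odd} (-1)^((e-1)/2) · e · m_D(e) = 0`. -/
theorem SD_eq_zero (D : ℕ) (hD : 0 < D) (hmod : D % 8 = 1) (hsq : ¬ IsSquare D) :
    ∑ e ∈ (Finset.range D).filter (fun e => Odd e ∧ e ^ 2 < D),
      (-1 : ℤ) ^ ((e - 1) / 2) * (e : ℤ) * (mD D e : ℤ) = 0 := by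
  have hzero := finsum_mem_positiveForms_eq_zero (mt Int.isSquare_natCast_iff.1 hsq)
  rw [← finsum_mem_eq_of_bijOn _ (bijOn_positiveForms hmod) fun _ _ => rfl,
    finsum_mem_coe_finset, Finset.sum_sigma] at hzero
  rw [← Int.cast_inj (α := ℚ), Int.cast_zero, ← hzero, Int.cast_sum]
  refine Finset.sum_congr rfl fun e he => ?_
  obtain ⟨-, hodd, hlt⟩ := Finset.mem_filter.1 he
  push_cast
  rw [mD_eq_sum_totient_div hlt.le, Finset.mul_sum]
  refine Finset.sum_congr rfl fun p hp => ?_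
  rw [weight_natCast_of_odd hodd
    ((disc_natCast_eq_iff hmod hodd hlt.le).2 (Nat.mem_divisorsAntidiagonal.1 hp).1)]
  ring
end
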